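/- arXiv:1109.6164 — 2 statements merged into one kernel-verified Lean document; each statement's English description precedes it below -/
import Mathlib

section
/- Let K' ⊆ ℝ be a Cantor set (nonempty compact, perfect, totally disconnected) with packing dimension strictly less than 1, and let T ⊆ ℝ have cardinality strictly less than the continuum. Then K' + T = {k + t : k ∈ K', t ∈ T} contains no Lebesgue measurable set of positive measure. -/
open Filter Set MeasureTheory
open scoped Pointwise ENNReal

/-- Minimal number of `ε`-balls needed to cover `s` (as an element of `ℝ≥0∞`,
`⊤` if no finite cover exists). -/
noncomputable def coverN {α : Type*} [PseudoMetricSpace α] (s : Set α) (ε : ℝ) : ℝ≥0∞ :=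
  ⨅ (t : Finset α) (_ : s ⊆ ⋃ x ∈ t, Metric.ball x ε), (t.card : ℝ≥0∞)

open Classical in
/-- Upper box (Minkowski) dimension. -/
noncomputable def ubDim {α : Type*} [PseudoMetricSpace α] (s : Set α) : ℝ≥0∞ :=
  Filter.limsup (fun ε : ℝ =>
      if coverN s ε = ⊤ then ⊤
      else ENNReal.ofReal (Real.log (coverN s ε).toReal / Real.log ε⁻¹))
    (nhdsWithin (0 : ℝ) (Set.Ioi 0))

/-- Packing dimension, defined as modified upper box dimension. -/
noncomputable def packingDim {α : Type*} [PseudoMetricSpace α] (s : Set α) : ℝ≥0∞ :=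
  ⨅ (A : ℕ → Set α) (_ : s ⊆ ⋃ n, A n), ⨆ n, ubDim (A n)

/-! If `K` has packing dimension less than `D = dim E`, then for large `n` the `n`-tuples lying in a
common translate of `K` form a null set: up to countable unions they are sums of a product of `n`
sets of dimension at most `d < D` and a bounded piece of the diagonal, so they have dimension at
most `n * d + D`, which is less than `n * D`. They are moreover contained in a null `σ`-compact set,
so by Mycielski's argument a measurable `P` of positive measure contains a family of continuum many
points, no `n` of which (with distinct indices) lie in a common translate of `K`. If `P` were
covered by fewer than continuum many translates of `K`, one of them would contain infinitely many
members of the family. -/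

open scoped Topology

/-- `s` can be covered by `O(ε ^ (-d))` balls of radius `ε` as `ε → 0⁺`. This bounds the upper box
dimension by `d`, and serves to compute the dimension of sums and products without logarithms.
The centers need not lie in `s`. -/
def HasCoverGrowth {X : Type*} [PseudoMetricSpace X] (s : Set X) (d : ℝ) : Prop :=
  ∃ C : ℝ, ∀ᶠ ε in 𝓝[>] (0 : ℝ), ∃ t : Finset X,
    s ⊆ ⋃ x ∈ t, Metric.ball x ε ∧ (t.card : ℝ) ≤ C * ε ^ (-d)

/-- The families indexed by `ι` all of whose members lie in a common translate of `K`: the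
relation that the members of a Cantor family are made to avoid. -/
def commonTranslate (ι : Type*) {G : Type*} [Sub G] (K : Set G) : Set (ι → G) :=
  {x | ∃ t, ∀ i, x i - t ∈ K}

section CoverGrowth

variable {X Y : Type*} [PseudoMetricSpace X] [PseudoMetricSpace Y] {s : Set X} {d : ℝ}

theorem exists_finset_card_lt_of_coverN_lt {ε : ℝ} {c : ℝ≥0∞} (h : coverN s ε < c) :
    ∃ t : Finset X, s ⊆ ⋃ x ∈ t, Metric.ball x ε ∧ (t.card : ℝ≥0∞) < c := by
  simpa only [coverN, iInf_lt_iff, exists_prop] using h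

theorem hasCoverGrowth_of_ubDim_lt {d : NNReal} (hs : ubDim s < d) : HasCoverGrowth s d := by
  have hd : (0 : ℝ) < d := ENNReal.coe_pos.1 (bot_le.trans_lt hs)
  refine ⟨1, ?_⟩
  filter_upwards [eventually_lt_of_limsup_lt hs, Ioo_mem_nhdsGT one_pos] with ε hlt ⟨hε, hε1⟩
  split_ifs at hlt with htop
  · exact absurd hlt not_top_lt
  have hlog : 0 < Real.log ε⁻¹ := Real.log_pos ((one_lt_inv₀ hε).2 hε1)
  rw [← ENNReal.ofReal_coe_nnreal, ENNReal.ofReal_lt_ofReal_iff hd, div_lt_iff₀ hlog,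
    ← Real.log_rpow (inv_pos.2 hε), Real.inv_rpow hε.le, ← Real.rpow_neg hε.le] at hlt
  have hcoverN : (coverN s ε).toReal < ε ^ (-(d : ℝ)) := by
    rcases ENNReal.toReal_nonneg (a := coverN s ε).eq_or_lt with hzero | hpos
    · rw [← hzero]
      positivity
    · exact (Real.log_lt_log_iff hpos (by positivity)).1 hlt
  obtain ⟨t, hst, hcard⟩ :=
    exists_finset_card_lt_of_coverN_lt ((ENNReal.lt_ofReal_iff_toReal_lt htop).2 hcoverN)
  refine ⟨t, hst, ?_⟩
  simpa using ((ENNReal.lt_ofReal_iff_toReal_lt (ENNReal.natCast_ne_top _)).1 hcard).le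

theorem HasCoverGrowth.mono {t : Set X} (ht : HasCoverGrowth t d) (hst : s ⊆ t) :
    HasCoverGrowth s d := by
  obtain ⟨C, hC⟩ := ht
  exact ⟨C, hC.mono fun ε ⟨c, hc, hcard⟩ => ⟨c, hst.trans hc, hcard⟩⟩

theorem HasCoverGrowth.of_ball_mul {c : ℝ} (hc : 0 < c) (C : ℝ)
    (h : ∀ᶠ ε in 𝓝[>] (0 : ℝ), ∃ t : Finset X,
      s ⊆ ⋃ x ∈ t, Metric.ball x (c * ε) ∧ (t.card : ℝ) ≤ C * ε ^ (-d)) :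
    HasCoverGrowth s d := by
  refine ⟨C * c ^ d, ?_⟩
  have hlim : Tendsto (fun ε : ℝ => ε / c) (𝓝[>] 0) (𝓝[>] 0) := by
    refine tendsto_nhdsWithin_iff.2 ⟨?_, ?_⟩
    · simpa using ((continuous_id.div_const c).tendsto (0 : ℝ)).mono_left nhdsWithin_le_nhds
    · filter_upwards [self_mem_nhdsWithin] with ε hε using div_pos hε hc
  filter_upwards [hlim.eventually h, self_mem_nhdsWithin] with ε ⟨t, hst, hcard⟩ hε
  rw [mul_div_cancel₀ _ hc.ne'] at hst
  refine ⟨t, hst, hcard.trans_eq ?_⟩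
  rw [Real.div_rpow (le_of_lt hε) hc.le, Real.rpow_neg hc.le, div_inv_eq_mul]
  ring

theorem HasCoverGrowth.closure (hs : HasCoverGrowth s d) : HasCoverGrowth (closure s) d := by
  obtain ⟨C, hC⟩ := hs
  refine .of_ball_mul two_pos C ?_
  filter_upwards [hC, self_mem_nhdsWithin] with ε ⟨t, hst, hcard⟩ hε
  refine ⟨t, (closure_mono hst).trans ?_, hcard⟩
  rw [Finset.closure_biUnion]
  exact iUnion₂_mono fun x _ => Metric.closure_ball_subset_closedBall.trans
    (Metric.closedBall_subset_ball (lt_two_mul_self hε))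

theorem HasCoverGrowth.isBounded (hs : HasCoverGrowth s d) : Bornology.IsBounded s := by
  obtain ⟨C, hC⟩ := hs
  obtain ⟨ε, t, hst, -⟩ := hC.exists
  exact ((Bornology.isBounded_biUnion_finset t).2 fun _ _ => Metric.isBounded_ball).subset hst

theorem HasCoverGrowth.image {K : NNReal} {f : X → Y} (hf : LipschitzWith K f)
    (hs : HasCoverGrowth s d) : HasCoverGrowth (f '' s) d := by
  classical
  obtain ⟨C, hC⟩ := hs
  refine .of_ball_mul (c := K + 1) (by positivity) C ?_
  filter_upwards [hC, self_mem_nhdsWithin] with ε ⟨t, hst, hcard⟩ hε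
  refine ⟨t.image f, ?_, (Nat.cast_le.2 Finset.card_image_le).trans hcard⟩
  rintro _ ⟨x, hx, rfl⟩
  obtain ⟨p, hp, hxp⟩ := mem_iUnion₂.1 (hst hx)
  refine mem_iUnion₂.2 ⟨f p, Finset.mem_image_of_mem f hp, ?_⟩
  calc dist (f x) (f p) ≤ K * dist x p := hf.dist_le_mul x p
    _ ≤ K * ε := by gcongr; exact (Metric.mem_ball.1 hxp).le
    _ < (K + 1) * ε := by linarith [mem_Ioi.1 hε]

theorem HasCoverGrowth.pi {ι : Type*} [Fintype ι] {A : ι → Set X}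
    (hA : ∀ i, HasCoverGrowth (A i) d) :
    HasCoverGrowth (univ.pi A) (Fintype.card ι * d) := by
  classical
  choose C hC using hA
  refine ⟨∏ i, C i, ?_⟩
  filter_upwards [eventually_all.2 hC, self_mem_nhdsWithin] with ε hcover hε
  choose t hAt hcard using hcover
  refine ⟨Fintype.piFinset t, fun x hx => ?_, ?_⟩
  · have hcenter : ∀ i, ∃ p ∈ t i, x i ∈ Metric.ball p ε := fun i => by
      simpa only [mem_iUnion₂, exists_prop] using hAt i (hx i trivial)
    choose p hp hxp using hcenter
    exact mem_iUnion₂.2 ⟨p, Fintype.mem_piFinset.2 hp, (dist_pi_lt_iff hε).2 hxp⟩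
  · calc ((Fintype.piFinset t).card : ℝ) = ∏ i, ((t i).card : ℝ) := by
          rw [Fintype.card_piFinset, Nat.cast_prod]
      _ ≤ ∏ i, C i * ε ^ (-d) :=
          Finset.prod_le_prod (fun i _ => Nat.cast_nonneg _) fun i _ => hcard i
      _ = (∏ i, C i) * ε ^ (-(Fintype.card ι * d)) := by
          rw [Finset.prod_mul_distrib, Finset.prod_const, Finset.card_univ,
            ← Real.rpow_mul_natCast (le_of_lt hε)]
          ring_nf

theorem HasCoverGrowth.add {G : Type*} [SeminormedAddCommGroup G] {s t : Set G} {d e : ℝ}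
    (hs : HasCoverGrowth s d) (ht : HasCoverGrowth t e) : HasCoverGrowth (s + t) (d + e) := by
  classical
  obtain ⟨C, hC⟩ := hs
  obtain ⟨D, hD⟩ := ht
  refine .of_ball_mul two_pos (C * D) ?_
  filter_upwards [hC, hD, self_mem_nhdsWithin] with ε ⟨p, hp, hpC⟩ ⟨q, hq, hqD⟩ hε
  refine ⟨p + q, ?_, ?_⟩
  · rintro _ ⟨x, hx, y, hy, rfl⟩
    obtain ⟨a, ha, hxa⟩ := mem_iUnion₂.1 (hp hx)
    obtain ⟨b, hb, hyb⟩ := mem_iUnion₂.1 (hq hy)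
    refine mem_iUnion₂.2 ⟨a + b, Finset.add_mem_add ha hb, ?_⟩
    calc dist (x + y) (a + b) ≤ dist x a + dist y b := dist_add_add_le x y a b
      _ < ε + ε := add_lt_add hxa hyb
      _ = 2 * ε := (two_mul ε).symm
  · calc ((p + q).card : ℝ) ≤ p.card * q.card := mod_cast Finset.card_add_le
      _ ≤ (C * ε ^ (-d)) * (D * ε ^ (-e)) := by
          gcongr
          exact (Nat.cast_nonneg _).trans hpC
      _ = C * D * ε ^ (-(d + e)) := by
          rw [neg_add, Real.rpow_add hε]
          ring

theorem hasCoverGrowth_Icc (a b : ℝ) : HasCoverGrowth (Icc a b) 1 := by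
  classical
  refine ⟨|b - a| + 1, ?_⟩
  filter_upwards [Ioo_mem_nhdsGT one_pos] with ε ⟨hε, hε1⟩
  refine ⟨(Finset.range (⌊|b - a| / ε⌋₊ + 1)).image fun k : ℕ => a + k * ε, fun x hx => ?_, ?_⟩
  · have hquot : 0 ≤ (x - a) / ε := div_nonneg (sub_nonneg.2 hx.1) hε.le
    have hlow := (le_div_iff₀ hε).1 (Nat.floor_le hquot)
    have hhigh := (div_lt_iff₀ hε).1 (Nat.lt_floor_add_one ((x - a) / ε))
    refine mem_iUnion₂.2 ⟨a + ⌊(x - a) / ε⌋₊ * ε, Finset.mem_image_of_mem _ ?_, ?_⟩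
    · refine Finset.mem_range_succ_iff.2 (Nat.floor_mono ?_)
      gcongr
      exact (sub_le_sub_right hx.2 a).trans (le_abs_self _)
    · rw [Metric.mem_ball, Real.dist_eq, abs_lt]
      constructor <;> linarith
  · calc (((Finset.range (⌊|b - a| / ε⌋₊ + 1)).image fun k : ℕ => a + k * ε).card : ℝ)
        ≤ ⌊|b - a| / ε⌋₊ + 1 := by
          exact_mod_cast Finset.card_image_le.trans_eq (Finset.card_range _)
      _ ≤ |b - a| / ε + 1 / ε := by
          gcongr
          · exact Nat.floor_le (by positivity)
          · exact (one_le_div hε).2 hε1.le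
      _ = (|b - a| + 1) * ε ^ (-1 : ℝ) := by
          rw [Real.rpow_neg_one]
          ring

end CoverGrowth

section FiniteDimensional

variable {E : Type*} [NormedAddCommGroup E] [NormedSpace ℝ E] [FiniteDimensional ℝ E]

theorem hasCoverGrowth_finrank_of_isBounded {s : Set E} (hs : Bornology.IsBounded s) :
    HasCoverGrowth s (Module.finrank ℝ E) := by
  let e : E ≃L[ℝ] (Fin (Module.finrank ℝ E) → ℝ) := ContinuousLinearEquiv.ofFinrankEq (by simp)
  obtain ⟨R, hR, hsR⟩ := (e.lipschitz.isBounded_image hs).subset_closedBall_lt 0 0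
  have hcube : HasCoverGrowth (e '' s) (Module.finrank ℝ E) := by
    rw [closedBall_pi _ hR.le] at hsR
    simp only [Real.closedBall_eq_Icc] at hsR
    simpa using (HasCoverGrowth.pi fun _ => hasCoverGrowth_Icc _ _).mono hsR
  simpa only [e.symm_image_image] using hcube.image e.symm.lipschitz

theorem HasCoverGrowth.measure_eq_zero [MeasurableSpace E] [BorelSpace E] (μ : Measure E)
    [μ.IsAddHaarMeasure] {s : Set E} {d : ℝ} (hs : HasCoverGrowth s d)
    (hd : d < Module.finrank ℝ E) : μ s = 0 := by
  obtain ⟨C, hC⟩ := hs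
  have hbound : ∀ᶠ ε in 𝓝[>] (0 : ℝ),
      μ s ≤ ENNReal.ofReal (C * ε ^ (Module.finrank ℝ E - d)) * μ (Metric.ball 0 1) := by
    filter_upwards [hC, self_mem_nhdsWithin] with ε ⟨t, hst, hcard⟩ hε
    calc μ s ≤ ∑ x ∈ t, μ (Metric.ball x ε) :=
          (measure_mono hst).trans (measure_biUnion_finset_le _ _)
      _ = ENNReal.ofReal (t.card * ε ^ Module.finrank ℝ E) * μ (Metric.ball 0 1) := by
          simp only [μ.addHaar_ball_of_pos _ hε, Finset.sum_const, nsmul_eq_mul,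
            ENNReal.ofReal_mul (Nat.cast_nonneg _), ENNReal.ofReal_natCast, mul_assoc]
      _ ≤ ENNReal.ofReal (C * ε ^ (-d) * ε ^ Module.finrank ℝ E) * μ (Metric.ball 0 1) := by
          have : 0 ≤ ε := (mem_Ioi.1 hε).le
          gcongr
      _ = ENNReal.ofReal (C * ε ^ (Module.finrank ℝ E - d)) * μ (Metric.ball 0 1) := by
          rw [mul_assoc, ← Real.rpow_natCast, ← Real.rpow_add hε, neg_add_eq_sub]
  have hlim : Tendsto (fun ε : ℝ =>
      ENNReal.ofReal (C * ε ^ (Module.finrank ℝ E - d)) * μ (Metric.ball 0 1)) (𝓝[>] 0) (𝓝 0) := by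
    have hpow : Tendsto (fun ε : ℝ => C * ε ^ (Module.finrank ℝ E - d)) (𝓝[>] 0) (𝓝 0) := by
      have := ((Real.continuousAt_rpow_const 0 _ (.inr (sub_pos.2 hd).le)).tendsto.const_mul
        C).mono_left (nhdsWithin_le_nhds (s := Ioi 0))
      rwa [Real.zero_rpow (sub_pos.2 hd).ne', mul_zero] at this
    simpa using ENNReal.Tendsto.mul_const (ENNReal.tendsto_ofReal hpow)
      (.inr measure_ball_lt_top.ne)
  exact le_antisymm (ge_of_tendsto hlim hbound) bot_le

end FiniteDimensional

theorem exists_isCompact_cover_of_packingDim_lt {X : Type*} [PseudoMetricSpace X] [ProperSpace X]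
    {K : Set X} {D : ℝ≥0∞} (hK : packingDim K < D) :
    ∃ d : NNReal, d < D ∧ ∃ A : ℕ → Set X,
      (∀ n, IsCompact (A n)) ∧ (∀ n, HasCoverGrowth (A n) d) ∧ K ⊆ ⋃ n, A n := by
  obtain ⟨A, hA⟩ := iInf_lt_iff.1 hK
  obtain ⟨hKA, hA⟩ := iInf_lt_iff.1 hA
  obtain ⟨d, hAd, hd⟩ := ENNReal.lt_iff_exists_nnreal_btwn.1 hA
  have hgrowth : ∀ n, HasCoverGrowth (A n) d := fun n =>
    hasCoverGrowth_of_ubDim_lt ((le_iSup (fun k => ubDim (A k)) n).trans_lt hAd)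
  exact ⟨d, hd, fun n => closure (A n), fun n => (hgrowth n).isBounded.isCompact_closure,
    fun n => (hgrowth n).closure, hKA.trans (iUnion_mono fun n => subset_closure)⟩

section CommonTranslate

theorem commonTranslate_subset_iUnion {ι G : Type*} [SeminormedAddCommGroup G] {K : Set G}
    {A : ℕ → Set G} (hK : K ⊆ ⋃ n, A n) :
    commonTranslate ι K ⊆ ⋃ p : (ι → ℕ) × ℕ,
      univ.pi (fun i => A (p.1 i)) + Function.const ι '' Metric.closedBall (0 : G) p.2 := by
  rintro x ⟨t, ht⟩
  choose σ hσ using fun i => mem_iUnion.1 (hK (ht i))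
  obtain ⟨m, hm⟩ := exists_nat_ge ‖t‖
  exact mem_iUnion.2 ⟨(σ, m), Set.mem_add.2 ⟨fun i => x i - t, fun i _ => hσ i, _,
    mem_image_of_mem _ (mem_closedBall_zero_iff.2 hm), funext fun i => sub_add_cancel _ _⟩⟩

variable {E : Type*} [NormedAddCommGroup E] [NormedSpace ℝ E] [FiniteDimensional ℝ E]

theorem HasCoverGrowth.pi_add_const_image {ι : Type*} [Fintype ι] {A : ι → Set E} {d : ℝ}
    (hA : ∀ i, HasCoverGrowth (A i) d) {I : Set E} (hI : Bornology.IsBounded I) :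
    HasCoverGrowth (univ.pi A + Function.const ι '' I)
      (Fintype.card ι * d + Module.finrank ℝ E) :=
  have hconst : LipschitzWith 1 (Function.const ι : E → ι → E) :=
    LipschitzWith.mk_one fun x y => dist_pi_const_le x y
  (HasCoverGrowth.pi hA).add ((hasCoverGrowth_finrank_of_isBounded hI).image hconst)

theorem exists_isSigmaCompact_null_superset_commonTranslate [MeasurableSpace E] [BorelSpace E]
    (μ : Measure E) [μ.IsAddHaarMeasure] {K : Set E} (hK : packingDim K < Module.finrank ℝ E) :
    ∃ (n : ℕ) (S : Set (Fin n → E)), commonTranslate (Fin n) K ⊆ S ∧ IsSigmaCompact S ∧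
      Measure.pi (fun _ => μ) S = 0 := by
  obtain ⟨d, hd, A, hAc, hA, hKA⟩ := exists_isCompact_cover_of_packingDim_lt hK
  have hd' : (0 : ℝ) < Module.finrank ℝ E - d := sub_pos.2 (mod_cast hd)
  obtain ⟨n, hn⟩ := exists_nat_gt (Module.finrank ℝ E / (Module.finrank ℝ E - d : ℝ))
  rw [div_lt_iff₀ hd'] at hn
  refine ⟨n, _, commonTranslate_subset_iUnion hKA, isSigmaCompact_iUnion_of_isCompact _ fun p => ?_,
    measure_iUnion_null fun p => ?_⟩
  · exact (isCompact_univ_pi fun i => hAc _).add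
      ((isCompact_closedBall _ _).image (continuous_pi fun _ => continuous_id))
  · refine (HasCoverGrowth.pi_add_const_image (fun i => hA (p.1 i))
      Metric.isBounded_closedBall).measure_eq_zero _ ?_
    simp only [Fintype.card_fin, Module.finrank_pi_fintype, Finset.sum_const, Finset.card_univ,
      smul_eq_mul, Nat.cast_mul]
    linarith

end CommonTranslate

section Mycielski

theorem quasiMeasurePreserving_comp_injective {ι κ X : Type*} [Fintype ι] [Fintype κ]
    [MeasurableSpace X] (μ : Measure X) [SigmaFinite μ] {f : ι → κ} (hf : Function.Injective f) :
    Measure.QuasiMeasurePreserving (fun x : κ → X => x ∘ f)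
      (Measure.pi fun _ => μ) (Measure.pi fun _ => μ) := by
  classical
  have hsplit := measurePreserving_piEquivPiSubtypeProd (fun _ : κ => μ) (fun k => ∃ i, f i = k)
  have hreindex := (measurePreserving_piCongrLeft (fun _ : {k // ∃ i, f i = k} => μ)
    (Equiv.ofInjective f hf)).symm
  exact hreindex.quasiMeasurePreserving.comp
    (Measure.quasiMeasurePreserving_fst.comp hsplit.quasiMeasurePreserving)

theorem eventually_injective_restrict_of_injective {ι : Type*} [Finite ι] {α : Type*}
    {b : ι → ℕ → α} (hb : Function.Injective b) :
    ∀ᶠ m in atTop, Function.Injective fun i (k : Fin m) => b i k := by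
  refine eventually_all.2 fun i => eventually_all.2 fun j => ?_
  by_cases hij : i = j
  · exact .of_forall fun _ _ => hij
  · obtain ⟨k, hk⟩ := Function.ne_iff.1 (hb.ne hij)
    filter_upwards [eventually_gt_atTop k] with m hm h
    exact absurd (congrFun h ⟨k, hm⟩) hk

variable {X ι : Type*} [PseudoMetricSpace X] [HereditarilyLindelofSpace X] [MeasurableSpace X]
  [Fintype ι] (μ : Measure X) [SigmaFinite μ]

theorem exists_mem_support_dist_lt_comp_notMem {κ : Type*} [Finite κ] {E : Set (ι → X)}
    (hE0 : Measure.pi (fun _ => μ) E = 0) {x : κ → X} (hx : ∀ k, x k ∈ μ.support) {r : ℝ}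
    (hr : 0 < r) :
    ∃ y : κ → X, (∀ k, y k ∈ μ.support) ∧ (∀ k, dist (y k) (x k) < r) ∧
      ∀ f : ι → κ, Function.Injective f → y ∘ f ∉ E := by
  cases nonempty_fintype κ
  have hsupport : ∀ᵐ y ∂(Measure.pi fun _ : κ => μ), ∀ k, y k ∈ μ.support :=
    ae_all_iff.2 fun k => (Measure.quasiMeasurePreserving_eval _ k).ae Measure.support_mem_ae
  have havoid : ∀ᵐ y ∂(Measure.pi fun _ : κ => μ), ∀ f : ι → κ, Function.Injective f →
      y ∘ f ∉ E :=
    ae_all_iff.2 fun f => ae_all_iff.2 fun hf =>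
      (quasiMeasurePreserving_comp_injective μ hf).ae (measure_eq_zero_iff_ae_notMem.1 hE0)
  have hnear : ∃ᵐ y ∂(Measure.pi fun _ : κ => μ), y ∈ univ.pi fun k => Metric.ball (x k) r := by
    rw [frequently_ae_mem_iff, Measure.pi_pi]
    exact Finset.prod_ne_zero_iff.2 fun k _ =>
      ((Measure.mem_support_iff_forall _).1 (hx k) _ (Metric.ball_mem_nhds _ hr)).ne'
  obtain ⟨y, hy, hyS, hyE⟩ := (hnear.and_eventually (hsupport.and havoid)).exists
  exact ⟨y, hyS, fun k => hy k trivial, hyE⟩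

theorem exists_closedBall_refinement_disjoint {κ : Type*} [Finite κ] {E : Set (ι → X)}
    (hE : IsClosed E) (hE0 : Measure.pi (fun _ => μ) E = 0) {x : κ → X}
    (hx : ∀ k, x k ∈ μ.support) {r : ℝ} (hr : 0 < r) :
    ∃ (y : κ → X) (ρ : ℝ), 0 < ρ ∧ (∀ k, y k ∈ μ.support) ∧
      (∀ k, Metric.closedBall (y k) ρ ⊆ Metric.closedBall (x k) r) ∧
      ∀ f : ι → κ, Function.Injective f → Disjoint (Metric.closedBall (y ∘ f) ρ) E := by
  obtain ⟨y, hyS, hyx, hyE⟩ := exists_mem_support_dist_lt_comp_notMem μ hE0 hx (half_pos hr)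
  have hdisj : ∀ᶠ ρ in 𝓝[>] (0 : ℝ), ∀ f : ι → κ, Function.Injective f →
      Disjoint (Metric.closedBall (y ∘ f) ρ) E := by
    refine eventually_all.2 fun f => eventually_all.2 fun hf => ?_
    obtain ⟨δ, hδ, hball⟩ := Metric.nhds_basis_closedBall.mem_iff.1
      (hE.isOpen_compl.mem_nhds (hyE f hf))
    filter_upwards [Ioc_mem_nhdsGT hδ] with ρ hρ
    exact disjoint_left.2 fun z hz => hball (Metric.closedBall_subset_closedBall hρ.2 hz)
  obtain ⟨ρ, hρE, hρ, hρr⟩ := (hdisj.and (Ioc_mem_nhdsGT (half_pos hr))).exists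
  refine ⟨y, ρ, hρ, hyS, fun k => Metric.closedBall_subset_closedBall' ?_, hρE⟩
  linarith [hyx k]

theorem exists_cantorScheme_disjoint {x₀ : X} (hx₀ : x₀ ∈ μ.support) {E : ℕ → Set (ι → X)}
    (hE : ∀ m, IsClosed (E m)) (hE0 : ∀ m, Measure.pi (fun _ => μ) (E m) = 0) :
    ∃ (c : ∀ m, (Fin m → Bool) → X) (r : ℕ → ℝ), (∀ m, 0 < r m) ∧
      (∀ m s, c m s ∈ μ.support) ∧
      (∀ m s, Metric.closedBall (c (m + 1) s) (r (m + 1)) ⊆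
        Metric.closedBall (c m (Fin.init s)) (r m)) ∧
      ∀ m (f : ι → Fin (m + 1) → Bool), Function.Injective f →
        Disjoint (Metric.closedBall (c (m + 1) ∘ f) (r (m + 1))) (E m) := by
  let Stage (m : ℕ) := {p : ((Fin m → Bool) → X) × ℝ // (∀ s, p.1 s ∈ μ.support) ∧ 0 < p.2}
  have hstep : ∀ m (p : Stage m), ∃ q : Stage (m + 1),
      (∀ s, Metric.closedBall (q.1.1 s) q.1.2 ⊆
        Metric.closedBall (p.1.1 (Fin.init s)) p.1.2) ∧
      ∀ f : ι → Fin (m + 1) → Bool, Function.Injective f →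
        Disjoint (Metric.closedBall (q.1.1 ∘ f) q.1.2) (E m) := by
    rintro m ⟨⟨x, r⟩, hx, hr⟩
    obtain ⟨y, ρ, hρ, hyS, hnested, hdisj⟩ := exists_closedBall_refinement_disjoint μ (hE m)
      (hE0 m) (x := fun s : Fin (m + 1) → Bool => x (Fin.init s)) (fun s => hx _) hr
    exact ⟨⟨(y, ρ), hyS, hρ⟩, hnested, hdisj⟩
  choose next hnested hdisj using hstep
  let stage : ∀ m, Stage m := fun m =>
    Nat.rec (motive := Stage) ⟨(fun _ => x₀, 1), fun _ => hx₀, one_pos⟩ next m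
  exact ⟨fun m => (stage m).1.1, fun m => (stage m).1.2, fun m => (stage m).2.2,
    fun m => (stage m).2.1, fun m => hnested m (stage m), fun m => hdisj m (stage m)⟩

/-- Mycielski's theorem for a null `F_σ` relation of finite arity. -/
theorem exists_cantor_family_mem_support_notMem (hμ : μ ≠ 0) (hcomp : IsCompact μ.support)
    {E : ℕ → Set (ι → X)} (hE : ∀ k, IsClosed (E k))
    (hE0 : ∀ k, Measure.pi (fun _ => μ) (E k) = 0) :
    ∃ φ : (ℕ → Bool) → X, (∀ b, φ b ∈ μ.support) ∧
      ∀ b : ι → ℕ → Bool, Function.Injective b → ∀ k, φ ∘ b ∉ E k := by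
  obtain ⟨x₀, hx₀⟩ := Measure.nonempty_support hμ
  obtain ⟨c, r, hr, hc, hnested, hdisj⟩ := exists_cantorScheme_disjoint μ hx₀
    (E := accumulate E) (fun m => (finite_Iic m).isClosed_biUnion fun k _ => hE k)
    (fun m => (measure_biUnion_null_iff (finite_Iic m).countable).2 fun k _ => hE0 k)
  have hlimit : ∀ b : ℕ → Bool,
      (⋂ m, Metric.closedBall (c m fun i => b i) (r m) ∩ μ.support).Nonempty := fun b =>
    IsCompact.nonempty_iInter_of_sequence_nonempty_isCompact_isClosed _
      (fun m => inter_subset_inter_left _ (hnested m fun i => b i))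
      (fun m => ⟨_, Metric.mem_closedBall_self (hr m).le, hc m _⟩)
      (hcomp.inter_left Metric.isClosed_closedBall)
      (fun m => Metric.isClosed_closedBall.inter Measure.isClosed_support)
  choose φ hφ using hlimit
  have hφmem : ∀ b m, φ b ∈ Metric.closedBall (c m fun i => b i) (r m) ∩ μ.support :=
    fun b => mem_iInter.1 (hφ b)
  refine ⟨φ, fun b => (hφmem b 0).2, fun b hb k hmem => ?_⟩
  obtain ⟨m, hinj, hkm⟩ := (((tendsto_add_atTop_nat 1).eventually
    (eventually_injective_restrict_of_injective hb)).and (eventually_ge_atTop k)).exists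
  refine disjoint_left.1 (hdisj m _ hinj) ?_ (mem_biUnion hkm hmem)
  exact (dist_pi_le_iff (hr _).le).2 fun i => (hφmem (b i) (m + 1)).1

end Mycielski

theorem exists_cantor_family_mem_notMem_of_measure_ne_zero {X ι : Type*} [MetricSpace X]
    [HereditarilyLindelofSpace X] [MeasurableSpace X] [OpensMeasurableSpace X] [Fintype ι]
    (μ : Measure X) [SigmaFinite μ] [μ.InnerRegular] {P : Set X} (hP : MeasurableSet P)
    (hP0 : μ P ≠ 0) {E : ℕ → Set (ι → X)} (hE : ∀ k, IsClosed (E k))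
    (hE0 : ∀ k, Measure.pi (fun _ => μ) (E k) = 0) :
    ∃ φ : (ℕ → Bool) → X, (∀ b, φ b ∈ P) ∧
      ∀ b : ι → ℕ → Bool, Function.Injective b → ∀ k, φ ∘ b ∉ E k := by
  obtain ⟨C, hCP, hC, hC0⟩ := hP.exists_lt_isCompact (pos_iff_ne_zero.2 hP0)
  have hsupport : (μ.restrict C).support ⊆ C :=
    Measure.support_subset_of_isClosed hC.isClosed (self_mem_ae_restrict hC.measurableSet)
  obtain ⟨φ, hφ, hφE⟩ := exists_cantor_family_mem_support_notMem (μ.restrict C)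
    (Measure.restrict_eq_zero.not.2 hC0.ne')
    (hC.of_isClosed_subset Measure.isClosed_support hsupport) hE fun k => by
      rw [← Measure.restrict_pi_pi]
      exact le_antisymm ((Measure.restrict_apply_le _ _).trans_eq (hE0 k)) bot_le
  exact ⟨φ, fun b => hCP (hsupport (hφ b)), hφE⟩

theorem exists_injective_forall_eq_of_mk_lt_continuum {α : Type*}
    (h : Cardinal.mk α < Cardinal.continuum) (τ : (ℕ → Bool) → α) (n : ℕ) :
    ∃ (a : α) (b : Fin n → ℕ → Bool), Function.Injective b ∧ ∀ i, τ (b i) = a := by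
  obtain ⟨a, ha⟩ := Cardinal.exists_infinite_fiber (fun b : ULift (ℕ → Bool) => τ b.down)
    (by simpa using h)
  let e := Infinite.natEmbedding ((fun b : ULift (ℕ → Bool) => τ b.down) ⁻¹' {a})
  refine ⟨a, fun i => (e i).1.down, fun i j hij => ?_, fun i => (e i).2⟩
  exact Fin.ext (e.injective (Subtype.ext (ULift.down_injective hij)))

theorem stmt2_general {E : Type*} [NormedAddCommGroup E] [NormedSpace ℝ E]
    [FiniteDimensional ℝ E] [MeasurableSpace E] [BorelSpace E] (μ : Measure E)
    [μ.IsAddHaarMeasure] {K T P : Set E} (hK : packingDim K < Module.finrank ℝ E)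
    (hT : Cardinal.mk T < Cardinal.continuum) (hPKT : P ⊆ K + T) (hP : MeasurableSet P) :
    μ P = 0 := by
  by_contra hP0
  obtain ⟨n, S, hKS, hS, hS0⟩ := exists_isSigmaCompact_null_superset_commonTranslate μ hK
  obtain ⟨F, hF, rfl⟩ := hS
  obtain ⟨φ, hφP, hφ⟩ := exists_cantor_family_mem_notMem_of_measure_ne_zero μ hP hP0
    (fun k => (hF k).isClosed) (fun k => measure_mono_null (subset_iUnion F k) hS0)
  have htranslate : ∀ b, ∃ t : T, φ b - t ∈ K := fun b => by
    obtain ⟨k, hk, t, ht, hkt⟩ := hPKT (hφP b)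
    exact ⟨⟨t, ht⟩, by rwa [← hkt, add_sub_cancel_right]⟩
  choose τ hτ using htranslate
  obtain ⟨t, b, hb, hbt⟩ := exists_injective_forall_eq_of_mk_lt_continuum hT τ n
  have hcommon : φ ∘ b ∈ commonTranslate (Fin n) K := ⟨t, fun i => hbt i ▸ hτ (b i)⟩
  obtain ⟨k, hk⟩ := mem_iUnion.1 (hKS hcommon)
  exact hφ b hb k hk

theorem stmt2 (K' : Set ℝ) (hne : K'.Nonempty) (hcomp : IsCompact K') (hperf : Perfect K')
    (htd : IsTotallyDisconnected K') (hdim : packingDim K' < 1)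
    (T : Set ℝ) (hT : Cardinal.mk T < Cardinal.continuum) :
    ∀ P : Set ℝ, P ⊆ K' + T → MeasurableSet P → volume P = 0 := by
  exact fun P hPKT hP => stmt2_general volume (by simpa using hdim) hT hPKT hP
end

section
/- There exist a set X ⊆ ℝ with positive Lebesgue outer measure and a Borel probability measure μ on ℝ such that μ(X + t) = 0 for every t ∈ ℝ (where μ is extended to arbitrary sets as an outer measure). -/
open MeasureTheory

/-! Let `C` be the Cantor set of sums `∑ εₙ cⁿ` with digits `εₙ ∈ {0, 1}`, where `c` is so small
that even `(C - C) - (C - C)` is null. Enumerate the compact sets of positive measure in order type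
at most `𝔠`, and choose from each one a point that differs from no earlier choice by an element of
`C - C`. This is possible because a compact set of positive measure contains continuum many points
whose mutual differences avoid the null compact set `(C - C) - (C - C)`, and each earlier choice
excludes at most one of them. The chosen points form a non-null set `X` every translate of which
meets `C` in at most one point, so any atomless probability measure carried by `C` will do. -/

open Set TopologicalSpace Topology

open scoped Cardinal ENNReal Pointwise

universe u v

section Selection

variable {ι : Type u} {α : Type v} {R : α → α → Prop} [Std.Symm R]

theorem exists_forall_mem_pairwise_not (F : ι → Set α)
    (h : ∀ i, ∀ s : Set α, Cardinal.lift.{u} #s < Cardinal.lift.{v} #ι →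
      ∃ y ∈ F i, ∀ z ∈ s, ¬ R y z) :
    ∃ x : ι → α, (∀ i, x i ∈ F i) ∧ Pairwise fun i j => ¬ R (x i) (x j) := by
  obtain ⟨_, _, hord⟩ := Cardinal.exists_ord_eq_type_lt ι
  have hlt (i : ι) (x : Iio i → α) :
      Cardinal.lift.{u} #(range x) < Cardinal.lift.{v} #ι :=
    Cardinal.mk_range_le_lift.trans_lt (Cardinal.lift_lt.2 (Cardinal.mk_Iio_lt i hord))
  choose g hgF hgR using fun i (x : Iio i → α) => h i (range x) (hlt i x)
  let x : ι → α := WellFoundedLT.fix fun i earlier => g i fun j => earlier j j.2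
  have hx (i : ι) : x i = g i fun j => x j := WellFoundedLT.fix_eq _ i
  have hxR {i j : ι} (hji : j < i) : ¬ R (x i) (x j) := by
    rw [hx i]
    exact hgR i _ _ ⟨⟨j, hji⟩, rfl⟩
  refine ⟨x, fun i => hx i ▸ hgF i _, fun i j hij => ?_⟩
  rcases hij.lt_or_gt with hlt | hgt
  · exact fun hR => hxR hlt (symm hR)
  · exact hxR hgt

theorem exists_forall_mem_not_of_pairwise_not_comp {x : ι → α} {s : Set α}
    (hx : Pairwise fun i j => ¬ Relation.Comp R R (x i) (x j))
    (hs : Cardinal.lift.{u} #s < Cardinal.lift.{v} #ι) : ∃ i, ∀ z ∈ s, ¬ R (x i) z := by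
  by_contra! hcover
  choose z hzs hRz using hcover
  have hinj : Function.Injective fun i => (⟨z i, hzs i⟩ : s) := fun i j hij => by
    have hz : z i = z j := congrArg Subtype.val hij
    by_contra hne
    exact hx hne ⟨z i, hRz i, hz ▸ symm (hRz j)⟩
  exact hs.not_ge (Cardinal.lift_mk_le_lift_mk_of_injective hinj)

end Selection

theorem exists_cantor_pairwise_not {α : Type*} [TopologicalSpace α] [T2Space α]
    {R : α → α → Prop} [Std.Symm R] {p : Compacts α → Prop}
    (hne : ∀ K, p K → (K : Set α).Nonempty)
    (hsplit : ∀ K, p K → ∃ K₀ ≤ K, ∃ K₁ ≤ K, p K₀ ∧ p K₁ ∧ ∀ x ∈ K₀, ∀ y ∈ K₁, ¬ R x y)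
    {K : Compacts α} (hK : p K) :
    ∃ x : (ℕ → Bool) → α, (∀ a, x a ∈ K) ∧ Pairwise fun a b => ¬ R (x a) (x b) := by
  have hchildren (L : {L // p L}) : ∃ A : Bool → {L // p L}, (∀ i, (A i).1 ≤ L) ∧
      ∀ x ∈ (A false).1, ∀ y ∈ (A true).1, ¬ R x y := by
    obtain ⟨K₀, h₀, K₁, h₁, hp₀, hp₁, hR⟩ := hsplit L L.2
    exact ⟨fun i => cond i ⟨K₁, hp₁⟩ ⟨K₀, hp₀⟩, Bool.forall_bool.2 ⟨h₀, h₁⟩, hR⟩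
  choose A hA hAR using hchildren
  let T (l : List Bool) : {L // p L} := l.foldr (fun i L => A L i) ⟨K, hK⟩
  have hbranch (a : ℕ → Bool) : (⋂ n, ((T (PiNat.res a n)).1 : Set α)).Nonempty :=
    IsCompact.nonempty_iInter_of_sequence_nonempty_isCompact_isClosed _
      (fun n => hA (T (PiNat.res a n)) (a n)) (fun n => hne _ (T (PiNat.res a n)).2)
      (T []).1.isCompact (fun n => (T (PiNat.res a n)).1.isCompact.isClosed)
  choose x hx using hbranch
  rw [forall_congr' fun a => mem_iInter] at hx
  have hxR {a b : ℕ → Bool} {n : ℕ} (hab : PiNat.res a n = PiNat.res b n)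
      (ha : a n = false) (hb : b n = true) : ¬ R (x a) (x b) := by
    have hxa : x a ∈ (T (PiNat.res a (n + 1))).1 := hx a (n + 1)
    have hxb : x b ∈ (T (PiNat.res b (n + 1))).1 := hx b (n + 1)
    rw [PiNat.res_succ, ha] at hxa
    rw [PiNat.res_succ, ← hab, hb] at hxb
    exact hAR _ _ hxa _ hxb
  refine ⟨x, fun a => hx a 0, fun a b hab => ?_⟩
  have hres : PiNat.res a (PiNat.firstDiff a b) = PiNat.res b (PiNat.firstDiff a b) :=
    PiNat.res_eq_res.2 fun _ => PiNat.apply_eq_of_lt_firstDiff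
  have hdiff := PiNat.apply_firstDiff_ne hab
  cases ha : a (PiNat.firstDiff a b) <;> cases hb : b (PiNat.firstDiff a b)
  · exact absurd (ha.trans hb.symm) hdiff
  · exact hxR hres ha hb
  · exact fun hR => hxR hres.symm hb ha (symm hR)
  · exact absurd (ha.trans hb.symm) hdiff

section NullRelation

variable {α : Type*} [TopologicalSpace α] [SecondCountableTopology α] [MeasurableSpace α]
  {μ : Measure α} {R : α → α → Prop}

theorem exists_compacts_le_le_not_rel [RegularSpace α] (hR : IsClosed {p : α × α | R p.1 p.2})
    (hnull : ∀ y, μ {x | R x y} = 0) {K : Compacts α} (hK : μ K ≠ 0) :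
    ∃ K₀ ≤ K, ∃ K₁ ≤ K, μ K₀ ≠ 0 ∧ μ K₁ ≠ 0 ∧ ∀ x ∈ K₀, ∀ y ∈ K₁, ¬ R x y := by
  obtain ⟨y, -, hy⟩ := exists_mem_forall_mem_nhdsWithin_pos_measure hK
  have hKy : μ (K \ {x | R x y}) ≠ 0 := by rwa [measure_sdiff_null (hnull y)]
  obtain ⟨x, hxK, hx⟩ := exists_mem_forall_mem_nhdsWithin_pos_measure hKy
  have hxy : {p : α × α | R p.1 p.2}ᶜ ∈ 𝓝 (x, y) := hR.isOpen_compl.mem_nhds hxK.2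
  rw [nhds_prod_eq, ((closed_nhds_basis x).prod (closed_nhds_basis y)).mem_iff] at hxy
  obtain ⟨⟨U, V⟩, ⟨⟨hU, hUc⟩, hV, hVc⟩, hUV⟩ := hxy
  refine ⟨⟨K ∩ U, K.isCompact.inter_right hUc⟩, inter_subset_left,
    ⟨K ∩ V, K.isCompact.inter_right hVc⟩, inter_subset_left, ?_, ?_,
    fun a ha b hb => hUV (mk_mem_prod ha.2 hb.2)⟩
  · exact (hx _ (nhdsWithin_mono x sdiff_subset (inter_mem_nhdsWithin K hU))).ne'
  · exact (hy _ (inter_mem_nhdsWithin K hV)).ne'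

theorem exists_cantor_pairwise_not_of_measure_ne_zero [T3Space α] [Std.Symm R]
    (hR : IsClosed {p : α × α | R p.1 p.2}) (hnull : ∀ y, μ {x | R x y} = 0)
    {K : Compacts α} (hK : μ K ≠ 0) :
    ∃ x : (ℕ → Bool) → α, (∀ a, x a ∈ K) ∧ Pairwise fun a b => ¬ R (x a) (x b) :=
  exists_cantor_pairwise_not (p := fun L => μ L ≠ 0) (fun _ => nonempty_of_measure_ne_zero)
    (fun _ => exists_compacts_le_le_not_rel hR hnull) hK

end NullRelation

theorem mk_measurableSet_le_continuum (α : Type*) [MeasurableSpace α]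
    [MeasurableSpace.CountablyGenerated α] : #{s : Set α // MeasurableSet s} ≤ 𝔠 := by
  obtain ⟨b, hb, rfl⟩ := MeasurableSpace.CountablyGenerated.isCountablyGenerated (α := α)
  exact MeasurableSpace.cardinal_measurableSet_le_continuum
    (hb.le_aleph0.trans Cardinal.aleph0_le_continuum)

theorem mk_compacts_le_continuum (α : Type*) [TopologicalSpace α] [T2Space α]
    [SecondCountableTopology α] : #(Compacts α) ≤ 𝔠 := by
  borelize α
  have hinj : Function.Injective fun K : Compacts α =>
      (⟨K, K.isCompact.measurableSet⟩ : {s : Set α // MeasurableSet s}) :=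
    fun _ _ h => Compacts.ext (congrArg Subtype.val h)
  exact (Cardinal.mk_le_of_injective hinj).trans (mk_measurableSet_le_continuum α)

section Bernstein

variable {α : Type*} [TopologicalSpace α] [MeasurableSpace α]

theorem exists_pairwise_not_inter_compacts_nonempty [T3Space α] [SecondCountableTopology α]
    {μ : Measure α} {R : α → α → Prop} [Std.Symm R]
    (hR : IsClosed {p : α × α | Relation.Comp R R p.1 p.2})
    (hnull : ∀ y, μ {x | Relation.Comp R R x y} = 0) :
    ∃ X : Set α, X.Pairwise (fun x y => ¬ R x y) ∧
      ∀ K : Compacts α, μ K ≠ 0 → (X ∩ K).Nonempty := by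
  have : Std.Symm (Relation.Comp R R) :=
    ⟨fun _ _ ⟨z, hxz, hzy⟩ => ⟨z, symm hzy, symm hxz⟩⟩
  obtain ⟨x, hxK, hxR⟩ := exists_forall_mem_pairwise_not (R := R)
    (fun K : {K : Compacts α // μ K ≠ 0} => (K.1 : Set α)) fun K s hs => by
      obtain ⟨y, hyK, hy⟩ := exists_cantor_pairwise_not_of_measure_ne_zero hR hnull K.2
      have hs𝔠 : #s < 𝔠 := (Cardinal.lift_lt.1 hs).trans_le
        ((Cardinal.mk_subtype_le _).trans (mk_compacts_le_continuum α))
      obtain ⟨a, ha⟩ := exists_forall_mem_not_of_pairwise_not_comp hy (by simpa using hs𝔠)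
      exact ⟨y a, hyK a, ha⟩
  refine ⟨range x, ?_, fun K hK => ⟨x ⟨K, hK⟩, mem_range_self _, hxK ⟨K, hK⟩⟩⟩
  rintro _ ⟨K, rfl⟩ _ ⟨L, rfl⟩ hne
  exact hxR fun hKL => hne (congrArg x hKL)

theorem measure_pos_of_inter_compacts_nonempty {μ : Measure α} [μ.InnerRegular] [NeZero μ]
    {X : Set α} (hX : ∀ K : Compacts α, μ K ≠ 0 → (X ∩ K).Nonempty) : 0 < μ X := by
  refine pos_iff_ne_zero.2 fun h₀ => ?_
  have hcompl : 0 < μ (toMeasurable μ X)ᶜ := by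
    rw [measure_compl (measurableSet_toMeasurable μ X) (by simp [h₀]), measure_toMeasurable, h₀,
      tsub_zero]
    exact NeZero.pos _
  obtain ⟨K, hKX, hK, hμK⟩ :=
    (measurableSet_toMeasurable μ X).compl.exists_lt_isCompact hcompl
  obtain ⟨x, hxX, hxK⟩ := hX ⟨K, hK⟩ hμK.ne'
  exact hKX hxK (subset_toMeasurable μ X hxX)

end Bernstein

theorem isCompact_sub {G : Type*} [TopologicalSpace G] [AddGroup G] [IsTopologicalAddGroup G]
    {A B : Set G} (hA : IsCompact A) (hB : IsCompact B) : IsCompact (A - B) := by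
  simpa only [sub_eq_add_neg] using hA.add hB.neg

theorem comp_sub_mem_iff {G : Type*} [AddGroup G] {S T : Set G} {x y : G} :
    Relation.Comp (fun a b => a - b ∈ S) (fun a b => a - b ∈ T) x y ↔ x - y ∈ S + T := by
  constructor
  · rintro ⟨z, hxz, hzy⟩
    exact ⟨x - z, hxz, z - y, hzy, sub_add_sub_cancel x z y⟩
  · rintro ⟨s, hs, t, ht, hst⟩
    have hx : x = s + t + y := sub_eq_iff_eq_add.1 hst.symm
    exact ⟨t + y, by simpa [hx, add_assoc] using hs, by simpa using ht⟩

theorem exists_measure_pos_forall_translate_inter_subsingleton {G : Type*} [AddGroup G]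
    [TopologicalSpace G] [IsTopologicalAddGroup G] [T2Space G] [SecondCountableTopology G]
    [MeasurableSpace G] [MeasurableAdd G] (μ : Measure G) [μ.IsAddRightInvariant]
    [μ.InnerRegular] [NeZero μ] {C : Set G} (hC : IsCompact C)
    (hnull : μ (C - C - (C - C)) = 0) :
    ∃ X : Set G, 0 < μ X ∧ ∀ t, ((fun x => x + t) '' X ∩ C).Subsingleton := by
  rw [sub_eq_add_neg (C - C), neg_sub] at hnull
  have : Std.Symm fun x y => x - y ∈ C - C :=
    ⟨fun x y hxy => by rwa [← neg_sub C, mem_neg, neg_sub]⟩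
  have hCC := isCompact_sub hC hC
  obtain ⟨X, hXC, hXK⟩ :=
    exists_pairwise_not_inter_compacts_nonempty (μ := μ) (R := fun x y => x - y ∈ C - C)
      (by
        simp only [comp_sub_mem_iff]
        exact (hCC.add hCC).isClosed.preimage continuous_sub)
      (fun y => by
        simp only [comp_sub_mem_iff, sub_eq_add_neg _ y]
        exact (measure_preimage_add_right μ (-y) _).trans hnull)
  refine ⟨X, measure_pos_of_inter_compacts_nonempty hXK, ?_⟩
  rintro t _ ⟨⟨x, hx, rfl⟩, hxC⟩ _ ⟨⟨y, hy, rfl⟩, hyC⟩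
  have hxy : x - y ∈ C - C := by simpa only [add_sub_add_right_eq_sub] using sub_mem_sub hxC hyC
  rw [hXC.eq hx hy (not_not.2 hxy)]

section SelfSimilar

theorem sub_subset_sub_add_smul {M E : Type*} [AddCommGroup E] [DistribSMul M E]
    {A B S T : Set E} {c : M} (hA : A ⊆ S + c • A) (hB : B ⊆ T + c • B) :
    A - B ⊆ S - T + c • (A - B) :=
  calc A - B ⊆ (S + c • A) - (T + c • B) := Set.sub_subset_sub hA hB
    _ = S - T + (c • A - c • B) := add_sub_add_comm ..
    _ = S - T + c • (A - B) :=
      congrArg (S - T + ·) (image_image2_distrib (smul_sub c)).symm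

variable {E : Type*} [NormedAddCommGroup E] [NormedSpace ℝ E] [FiniteDimensional ℝ E]
  [MeasurableSpace E] [BorelSpace E] (μ : Measure E) [μ.IsAddHaarMeasure] {A : Set E}
  {s : Finset E} {c : ℝ}

theorem measure_eq_zero_of_subset_finset_add_smul (hA : μ A ≠ ∞)
    (hsub : A ⊆ s + c • A) (hsc : s.card * |c ^ Module.finrank ℝ E| < 1) : μ A = 0 := by
  by_contra h₀
  have hle : μ A ≤ ENNReal.ofReal (s.card * |c ^ Module.finrank ℝ E|) * μ A :=
    calc μ A ≤ μ (⋃ d ∈ s, (d + ·) '' (c • A)) := by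
          rw [← iUnion_add_left_image] at hsub
          exact measure_mono hsub
      _ ≤ ∑ d ∈ s, μ ((d + ·) '' (c • A)) := measure_biUnion_finset_le ..
      _ = ENNReal.ofReal (s.card * |c ^ Module.finrank ℝ E|) * μ A := by
          simp [Measure.addHaar_smul, ENNReal.ofReal_mul, mul_assoc]
  have hlt : ENNReal.ofReal (s.card * |c ^ Module.finrank ℝ E|) * μ A < μ A := by
    simpa [mul_comm] using ENNReal.mul_lt_mul_right h₀ hA (ENNReal.ofReal_lt_one.2 hsc)
  exact hle.not_gt hlt

theorem measure_sub_sub_sub_eq_zero_of_subset_finset_add_smul (hA : IsCompact A)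
    (hsub : A ⊆ s + c • A) (hsc : s.card ^ 4 * |c ^ Module.finrank ℝ E| < 1) :
    μ (A - A - (A - A)) = 0 := by
  classical
  have hAA := isCompact_sub hA hA
  have hAAAA := isCompact_sub hAA hAA
  have hsub₂ := sub_subset_sub_add_smul hsub hsub
  have hsub₄ : A - A - (A - A) ⊆ ↑(s - s - (s - s)) + c • (A - A - (A - A)) := by
    simpa only [Finset.coe_sub] using sub_subset_sub_add_smul hsub₂ hsub₂
  have hcard : (s - s - (s - s)).card ≤ s.card ^ 4 :=
    calc (s - s - (s - s)).card ≤ (s - s).card * (s - s).card := Finset.card_sub_le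
      _ ≤ (s.card * s.card) * (s.card * s.card) :=
        Nat.mul_le_mul Finset.card_sub_le Finset.card_sub_le
      _ = s.card ^ 4 := by ring
  refine measure_eq_zero_of_subset_finset_add_smul μ hAAAA.measure_lt_top.ne hsub₄
    (hsc.trans_le' ?_)
  gcongr
  exact_mod_cast hcard

end SelfSimilar

section CantorSet

variable {c : ℝ}

theorem continuous_cantorFunction (h₀ : 0 ≤ c) (h₁ : c < 1) :
    Continuous (Cardinal.cantorFunction c) := by
  refine continuous_tsum (u := fun n => c ^ n) (fun n => ?_)
    (summable_geometric_of_lt_one h₀ h₁) (fun n f => ?_)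
  · exact (continuous_of_discreteTopology (f := fun i : Bool => cond i (c ^ n) 0)).comp
      (continuous_apply n)
  · cases hf : f n <;> simp [hf, abs_of_nonneg h₀, pow_nonneg h₀]

theorem isCompact_range_cantorFunction (h₀ : 0 ≤ c) (h₁ : c < 1) :
    IsCompact (range (Cardinal.cantorFunction c)) :=
  isCompact_range (continuous_cantorFunction h₀ h₁)

theorem not_countable_range_cantorFunction (h₀ : 0 < c) (h₁ : c < 1 / 2) :
    ¬ (range (Cardinal.cantorFunction c)).Countable := by
  rw [← Cardinal.le_aleph0_iff_set_countable,
    Cardinal.mk_range_eq _ (Cardinal.cantorFunction_injective h₀ h₁)]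
  simp [Cardinal.aleph0_lt_continuum]

theorem range_cantorFunction_subset (h₀ : 0 ≤ c) (h₁ : c < 1) :
    range (Cardinal.cantorFunction c) ⊆ {0, 1} + c • range (Cardinal.cantorFunction c) := by
  rintro _ ⟨f, rfl⟩
  rw [Cardinal.cantorFunction_succ f h₀ h₁]
  exact add_mem_add (by cases f 0 <;> simp) (smul_mem_smul_set (mem_range_self _))

theorem volume_range_cantorFunction_sub_sub_sub (h₀ : 0 ≤ c) (h₁ : c < 1 / 16) :
    volume (range (Cardinal.cantorFunction c) - range (Cardinal.cantorFunction c) -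
      (range (Cardinal.cantorFunction c) - range (Cardinal.cantorFunction c))) = 0 := by
  have hc : c < 1 := by linarith
  refine measure_sub_sub_sub_eq_zero_of_subset_finset_add_smul (s := {0, 1}) (c := c) volume
    (isCompact_range_cantorFunction h₀ hc) ?_ ?_
  · simpa only [Finset.coe_pair] using range_cantorFunction_subset h₀ hc
  · rw [Finset.card_pair zero_ne_one, Module.finrank_self, pow_one, abs_of_nonneg h₀]
    norm_num1
    linarith

end CantorSet

theorem exists_isProbabilityMeasure_nullSingletonClass_compl_eq_zero {α : Type*}
    [MeasurableSpace α] [StandardBorelSpace α] {C : Set α} (hC : MeasurableSet C)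
    (hunc : ¬ C.Countable) :
    ∃ μ : Measure α, IsProbabilityMeasure μ ∧ NullSingletonClass μ ∧ μ Cᶜ = 0 := by
  have := hC.standardBorel
  have : Uncountable unitInterval := by
    rw [← Cardinal.aleph0_lt_mk_iff, Cardinal.mk_Icc_real zero_lt_one]
    exact Cardinal.aleph0_lt_continuum
  let e : unitInterval ≃ᵐ C := PolishSpace.measurableEquivOfNotCountable not_countable hunc
  have he : MeasurableEmbedding fun s => (e s : α) :=
    (MeasurableEmbedding.subtype_coe hC).comp e.measurableEmbedding
  refine ⟨volume.map fun s => (e s : α),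
    Measure.isProbabilityMeasure_map he.measurable.aemeasurable, ⟨fun x => ?_⟩, ?_⟩
  · rw [he.map_apply]
    exact (subsingleton_singleton.preimage he.injective).measure_zero _
  · rw [he.map_apply, preimage_compl, preimage_eq_univ_iff.2 (range_subset_iff.2 fun s => (e s).2),
      compl_univ, measure_empty]

theorem stmt5 :
    ∃ (X : Set ℝ) (μ : Measure ℝ), IsProbabilityMeasure μ ∧
      0 < volume X ∧ ∀ t : ℝ, μ ((fun x => x + t) '' X) = 0 := by
  have hC := isCompact_range_cantorFunction (c := 1 / 17) (by norm_num) (by norm_num)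
  obtain ⟨X, hX, hXC⟩ := exists_measure_pos_forall_translate_inter_subsingleton volume hC
    (volume_range_cantorFunction_sub_sub_sub (by norm_num) (by norm_num))
  obtain ⟨μ, hμ, _, hμC⟩ := exists_isProbabilityMeasure_nullSingletonClass_compl_eq_zero
    hC.measurableSet (not_countable_range_cantorFunction (by norm_num) (by norm_num))
  refine ⟨X, μ, hμ, hX, fun t => ?_⟩
  rw [← measure_inter_conull hμC]
  exact (hXC t).measure_zero μ
end
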